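/- Let S be a numerical semigroup with multiplicity m, let a be a minimal generator of S with a > max(m, F(S)), and set T = S \ {a}. Then for every I ∈ 𝔑(T) with a ∉ I, one has I + S = I ∪ {a}, and moreover I ∪ {a} covers I in the poset (𝔑(T), ⪯). -/

import Mathlib

open Pointwise

/-- A numerical semigroup: an additive submonoid of `ℕ` with finite complement. -/
def IsNumericalSemigroup (S : Set ℕ) : Prop :=
  0 ∈ S ∧ (∀ a ∈ S, ∀ b ∈ S, a + b ∈ S) ∧ Sᶜ.Finite

/-- A normalized (relative) ideal of `S`: a subset of `ℕ` with `min I = 0`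
(equivalently `0 ∈ I`) satisfying `I + S ⊆ I`. -/
def IsNormalizedIdeal (S I : Set ℕ) : Prop :=
  0 ∈ I ∧ ∀ i ∈ I, ∀ s ∈ S, i + s ∈ I

/-- The set `𝔑(S)` of normalized ideals of `S`. -/
def NI (S : Set ℕ) : Set (Set ℕ) := {I : Set ℕ | IsNormalizedIdeal S I}

/-- The multiplicity of `S`: its least nonzero element. -/
noncomputable def multNS (S : Set ℕ) : ℕ := sInf {n : ℕ | n ∈ S ∧ n ≠ 0}

/-- The Frobenius number of `S` (or of an ideal): the largest natural number not in `S`. -/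
noncomputable def frobNS (S : Set ℕ) : ℕ := sSup Sᶜ

/-- A minimal generator of `S`: a nonzero element of `S` that is not the sum
of two nonzero elements of `S`. -/
def IsMinimalGenerator (S : Set ℕ) (a : ℕ) : Prop :=
  a ∈ S ∧ a ≠ 0 ∧ ¬ ∃ b ∈ S, ∃ c ∈ S, b ≠ 0 ∧ c ≠ 0 ∧ a = b + c

/-- A minimal generator of an ideal `I` of a numerical semigroup `T`:
an element `x ∈ I` with `x ≠ y + t` for every `y ∈ I` and nonzero `t ∈ T`. -/
def IsMinGenOfIdeal (T I : Set ℕ) (x : ℕ) : Prop :=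
  x ∈ I ∧ ∀ y ∈ I, ∀ t ∈ T, t ≠ 0 → x ≠ y + t

/-- The order `⪯` on normalized ideals: `I ⪯ J` iff `I + K = J` for some `K ∈ 𝔑(S)`. -/
def Preceq (S I J : Set ℕ) : Prop :=
  ∃ K : Set ℕ, IsNormalizedIdeal S K ∧ I + K = J

/-- `M` is the supremum of `{I, J}` in `(𝔑(S), ⪯)`. -/
def IsSupNI (S I J M : Set ℕ) : Prop :=
  IsNormalizedIdeal S M ∧ Preceq S I M ∧ Preceq S J M ∧
    ∀ L : Set ℕ, IsNormalizedIdeal S L → Preceq S I L → Preceq S J L → Preceq S M L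

/-- `M` is the infimum of `{I, J}` in `(𝔑(S), ⪯)`. -/
def IsInfNI (S I J M : Set ℕ) : Prop :=
  IsNormalizedIdeal S M ∧ Preceq S M I ∧ Preceq S M J ∧
    ∀ L : Set ℕ, IsNormalizedIdeal S L → Preceq S L I → Preceq S L J → Preceq S L M

/-- `(𝔑(S), ⪯)` is a lattice: every pair of normalized ideals has a supremum
and an infimum with respect to `⪯`. -/
def NILattice (S : Set ℕ) : Prop :=
  ∀ I J : Set ℕ, IsNormalizedIdeal S I → IsNormalizedIdeal S J →
    (∃ M : Set ℕ, IsSupNI S I J M) ∧ (∃ M : Set ℕ, IsInfNI S I J M)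

/-- The ordinary numerical semigroup `H_m = {0} ∪ {n : n ≥ m}`. -/
def ordinaryNS (m : ℕ) : Set ℕ := {0} ∪ {n : ℕ | m ≤ n}

/-- `I ∈ 𝔑(S) \ {S}` is `+`-irreducible if `I = J + K` with `J, K ∈ 𝔑(S)`
implies `I = J` or `I = K`. -/
def PlusIrreducible (S I : Set ℕ) : Prop :=
  IsNormalizedIdeal S I ∧ I ≠ S ∧
    ∀ J K : Set ℕ, IsNormalizedIdeal S J → IsNormalizedIdeal S K → I = J + K → I = J ∨ I = K

/-!
Every integer greater than `a` lies in `S \ {a} ⊆ I`, so adding `a` to a positive element of `I`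
stays in `I`, and the only element that `I + S` can have outside `I` is `0 + a`. Since `I ⪯ J`
implies `I ⊆ J`, nothing lies strictly between `I` and `I ∪ {a}` for `⪯`, as nothing does for `⊆`.
-/

section

variable {S T I J C : Set ℕ} {a n : ℕ}

theorem mem_of_frobNS_lt (hS : BddAbove Sᶜ) (hn : frobNS S < n) : n ∈ S :=
  Set.notMem_compl_iff.1 (notMem_of_csSup_lt hn hS)

theorem IsNumericalSemigroup.isNormalizedIdeal_self (hS : IsNumericalSemigroup S) :
    IsNormalizedIdeal S S :=
  ⟨hS.1, hS.2.1⟩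

namespace IsNormalizedIdeal

theorem anti (hI : IsNormalizedIdeal S I) (hTS : T ⊆ S) : IsNormalizedIdeal T I :=
  ⟨hI.1, fun i hi t ht ↦ hI.2 i hi t (hTS ht)⟩

theorem subset (hI : IsNormalizedIdeal S I) : S ⊆ I := fun s hs ↦ by
  simpa only [zero_add] using hI.2 0 hI.1 s hs

theorem add_eq_union_singleton (hI : IsNormalizedIdeal (S \ {a}) I) (h0 : 0 ∈ S) (ha : a ∈ S)
    (hIoi : Set.Ioi a ⊆ I) : I + S = I ∪ {a} := by
  apply Set.Subset.antisymm
  · rintro _ ⟨i, hi, s, hs, rfl⟩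
    obtain rfl | hsa := eq_or_ne s a
    · obtain rfl | hi_pos := Nat.eq_zero_or_pos i
      · exact Or.inr (zero_add s)
      · exact Or.inl (hIoi (Nat.lt_add_of_pos_left hi_pos))
    · exact Or.inl (hI.2 i hi s ⟨hs, hsa⟩)
  · exact Set.union_subset (Set.subset_add_left I h0)
      (Set.singleton_subset_iff.2 (Set.subset_add_right S hI.1 ha))

end IsNormalizedIdeal

namespace Preceq

theorem subset : Preceq S I J → I ⊆ J := by
  rintro ⟨K, hK, rfl⟩
  exact Set.subset_add_left I hK.1

theorem eq_or_eq_union_singleton (hIC : Preceq S I C) (hCI : Preceq S C (I ∪ {a})) :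
    C = I ∨ C = I ∪ {a} := by
  have h_wcovBy : I ⩿ I ∪ {a} := by
    simpa only [Set.union_singleton] using Set.wcovBy_insert a I
  exact h_wcovBy.eq_or_eq hIC.subset hCI.subset

end Preceq

end

/-- with `T = S \ {a}`, for every `I ∈ 𝔑(T)` with `a ∉ I` one has
`I + S = I ∪ {a}`, and `I ∪ {a}` covers `I` in the poset `(𝔑(T), ⪯)`. -/
theorem add_S_eq_union_and_covers (S : Set ℕ) (hS : IsNumericalSemigroup S)
    (a : ℕ) (ha : IsMinimalGenerator S a) (hgt : max (multNS S) (frobNS S) < a) :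
    ∀ I : Set ℕ, IsNormalizedIdeal (S \ {a}) I → a ∉ I →
      I + S = I ∪ {a} ∧
      (Preceq (S \ {a}) I (I ∪ {a}) ∧ I ≠ I ∪ {a}) ∧
      ¬ ∃ C : Set ℕ, IsNormalizedIdeal (S \ {a}) C ∧
        (Preceq (S \ {a}) I C ∧ I ≠ C) ∧
        (Preceq (S \ {a}) C (I ∪ {a}) ∧ C ≠ I ∪ {a}) := by
  intro I hI haI
  have hIoi : Set.Ioi a ⊆ I := fun n (hn : a < n) ↦
    have hnS : n ∈ S :=
      mem_of_frobNS_lt hS.2.2.bddAbove ((le_max_right _ _).trans_lt (hgt.trans hn))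
    hI.subset ⟨hnS, hn.ne'⟩
  have h_add : I + S = I ∪ {a} := hI.add_eq_union_singleton hS.1 ha.1 hIoi
  have h_preceq : Preceq (S \ {a}) I (I ∪ {a}) :=
    ⟨S, hS.isNormalizedIdeal_self.anti Set.sdiff_subset, h_add⟩
  have h_ne : I ≠ I ∪ {a} := by
    simpa only [Set.union_singleton] using Set.ne_insert_of_notMem I haI
  refine ⟨h_add, ⟨h_preceq, h_ne⟩, ?_⟩
  rintro ⟨C, -, ⟨hIC, hIC_ne⟩, hCI, hCI_ne⟩
  exact (hIC.eq_or_eq_union_singleton hCI).elim hIC_ne.symm hCI_ne
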